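/- Let G be a finite group, M ≤ G a quasi-simple subgroup, T ≤ G an abelian subgroup contained in the normalizer N_G(M), and r ∈ T. Assume that: (n) r does not centralize M (there is m ∈ M with r m ≠ m r); and (w) there exists x ∈ O_r^G ∩ T such that x ∉ O_r^M and x does not centralize M. Then the conjugacy class O_r^G is of type C. -/

import Mathlib

/-- The orbit of `g` under conjugation by the subgroup `H` of `G`. -/
def convOrbit {G : Type*} [Group G] (H : Subgroup G) (g : G) : Set G :=
  (fun h => h * g * h⁻¹) '' (H : Set G)

/-- A subset `O` of a group `G` (typically a conjugacy class) is of *type C*. -/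
def IsTypeC {G : Type*} [Group G] (O : Set G) : Prop :=
  ∃ (H : Subgroup G) (r s : G),
    r ∈ H ∧ r ∈ O ∧ s ∈ H ∧ s ∈ O ∧
    r * s ≠ s * r ∧
    Subgroup.closure (convOrbit H r ∪ convOrbit H s) = H ∧
    convOrbit H r ≠ convOrbit H s ∧
    ((2 < (convOrbit H r).ncard ∧ 2 < (convOrbit H s).ncard) ∨
      4 < (convOrbit H r).ncard ∨ 4 < (convOrbit H s).ncard)

/-- A group is quasi-simple if it is nontrivial, perfect, and its central quotient is simple. -/
def IsQuasiSimple (M : Type*) [Group M] : Prop :=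
  Nontrivial M ∧ commutator M = ⊤ ∧ IsSimpleGroup (M ⧸ Subgroup.center M)

/-!
Let `H = M⟨r, x⟩`. Since `r` and `x` commute and normalize `M`, their `H`-orbits are their
`M`-orbits, and these differ because `x ∉ O_r^M`. The subgroup generated by the `M`-orbit of `r`
is normalized by `M` and normalizes `M`, so, as `M` is quasi-simple, it either centralizes `M` or
contains `M`; by assumption it contains `M`, and likewise for `x`. Hence the two orbits generate
`H`, and some `s` in the orbit of `x` does not commute with `r`, as otherwise `r` would centralize
`M`. Finally, the size of each orbit is the index in `M` of a proper subgroup, and a perfect group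
has no subgroup of index two.
-/

open Subgroup

section Perfect

variable {G : Type*} [Group G]

theorem index_ne_two_of_isPerfect [Group.IsPerfect G] (K : Subgroup G) : K.index ≠ 2 := by
  intro hK
  have : K.Normal := normal_of_index_eq_two hK
  have : IsCyclic (G ⧸ K) := isCyclic_of_prime_card (p := 2) hK
  have : Subsingleton (G ⧸ K) := Group.IsPerfect.subsingleton_of_isMulCommutative
  have hK_one : K.index = 1 := Nat.card_of_subsingleton (1 : G ⧸ K)
  omega

theorem two_lt_relIndex_of_isPerfect {M K : Subgroup G} [Finite M] [Group.IsPerfect M]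
    (hMK : ¬ M ≤ K) : 2 < K.relIndex M := by
  have h_zero : K.relIndex M ≠ 0 := index_ne_zero_of_finite
  have h_one : K.relIndex M ≠ 1 := mt relIndex_eq_one.mp hMK
  have h_two : K.relIndex M ≠ 2 := index_ne_two_of_isPerfect _
  omega

theorem le_centralizer_of_commutator_le_centralizer {M K : Subgroup G} [Group.IsPerfect M]
    (h : ⁅M, K⁆ ≤ centralizer M) : M ≤ centralizer K := by
  rw [← commutator_eq_bot_iff_le_centralizer] at h ⊢
  have three_subgroups : ⁅⁅M, M⁆, K⁆ = ⊥ :=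
    commutator_commutator_eq_bot_of_rotate h (by rwa [commutator_comm K M])
  rwa [commutator_eq_self] at three_subgroups

end Perfect

namespace IsQuasiSimple

theorem isPerfect {P : Type*} [Group P] (hP : IsQuasiSimple P) : Group.IsPerfect P :=
  ⟨hP.2.1⟩

theorem le_center_or_eq_top_of_normal {P : Type*} [Group P] (hP : IsQuasiSimple P)
    (N : Subgroup P) [hN : N.Normal] : N ≤ center P ∨ N = ⊤ := by
  have := hP.2.2
  rcases (hN.map _ (QuotientGroup.mk'_surjective (center P))).eq_bot_or_eq_top with h | h
  · left
    rwa [Subgroup.map_eq_bot_iff, QuotientGroup.ker_mk'] at h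
  · right
    have h_sup : N ⊔ center P = ⊤ := by
      rw [← QuotientGroup.ker_mk' (center P), ← comap_map_eq, h, comap_top]
    rw [eq_top_iff, ← hP.2.1]
    exact hN.commutator_le_of_self_sup_commutative_eq_top h_sup inferInstance

variable {G : Type*} [Group G] {M : Subgroup G}

theorem le_or_le_centralizer (hM : IsQuasiSimple M) {K : Subgroup G}
    (hMK : M ≤ normalizer K) (hKM : K ≤ normalizer M) : M ≤ K ∨ M ≤ centralizer K := by
  have := hM.isPerfect
  have := normal_subgroupOf_of_le_normalizer hMK
  rcases hM.le_center_or_eq_top_of_normal (K.subgroupOf M) with h_center | h_top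
  · right
    refine le_centralizer_of_commutator_le_centralizer fun c hc ↦ ?_
    have hcM : c ∈ M := le_normalizer_iff_commutator_le_left.mp hKM hc
    have hcK : c ∈ K := le_normalizer_iff_commutator_le_right.mp hMK hc
    have hc_center : (⟨c, hcM⟩ : M) ∈ center M := h_center hcK
    exact fun m hm ↦ congrArg Subtype.val (mem_center_iff.mp hc_center ⟨m, hm⟩)
  · exact .inl (subgroupOf_eq_top.mp h_top)

end IsQuasiSimple

section ConvOrbit

variable {G : Type*} [Group G] {H M : Subgroup G} {r x g : G}

theorem mem_convOrbit_self (H : Subgroup G) (g : G) : g ∈ convOrbit H g :=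
  ⟨1, H.one_mem, by simp⟩

theorem convOrbit_subset (hMH : M ≤ H) (hg : g ∈ H) : convOrbit M g ⊆ H := by
  rintro _ ⟨m, hm, rfl⟩
  exact H.mul_mem (H.mul_mem (hMH hm) hg) (H.inv_mem (hMH hm))

theorem convOrbit_mono (hMH : M ≤ H) (g : G) : convOrbit M g ⊆ convOrbit H g :=
  Set.image_mono hMH

theorem convOrbit_eq_of_mem (hx : x ∈ convOrbit H g) : convOrbit H x = convOrbit H g := by
  obtain ⟨k, hk, rfl⟩ := hx
  apply Set.Subset.antisymm
  · rintro _ ⟨h, hh, rfl⟩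
    exact ⟨h * k, H.mul_mem hh hk, by group⟩
  · rintro _ ⟨h, hh, rfl⟩
    exact ⟨h * k⁻¹, H.mul_mem hh (H.inv_mem hk), by group⟩

theorem ncard_convOrbit (H : Subgroup G) (g : G) :
    (convOrbit H g).ncard = (centralizer {g}).relIndex H := by
  let _ : MulAction H G := MulAction.compHom G (MulAut.conj.comp H.subtype)
  have h_orbit : MulAction.orbit H g = convOrbit H g := by
    ext y
    simp [MulAction.mem_orbit_iff, convOrbit, MulAction.compHom_smul_def]
  have h_stabilizer : MulAction.stabilizer H g = (centralizer {g}).subgroupOf H := by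
    ext h
    simp [MulAction.mem_stabilizer_iff, mem_subgroupOf, mem_centralizer_singleton_iff,
      MulAction.compHom_smul_def, mul_inv_eq_iff_eq_mul]
  rw [← h_orbit, ← MulAction.index_stabilizer, h_stabilizer, relIndex]

theorem convOrbit_eq_of_le_sup (hMH : M ≤ H)
    (hH : H ≤ M ⊔ (normalizer M ⊓ centralizer {g})) : convOrbit H g = convOrbit M g := by
  refine Set.Subset.antisymm ?_ (convOrbit_mono hMH g)
  rintro _ ⟨h, hh, rfl⟩
  have h_mem : h ∈ ((M ⊔ (normalizer M ⊓ centralizer {g}) : Subgroup G) : Set G) := hH hh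
  rw [coe_mul_of_right_le_normalizer_left _ _ inf_le_left] at h_mem
  obtain ⟨m, hm, t, ⟨-, ht⟩, rfl⟩ := h_mem
  have htg : t * g * t⁻¹ = g := mul_inv_eq_of_eq_mul (mem_centralizer_singleton_iff.mp ht)
  refine ⟨m, hm, ?_⟩
  calc m * g * m⁻¹ = m * (t * g * t⁻¹) * m⁻¹ := by rw [htg]
    _ = m * t * g * (m * t)⁻¹ := by group

theorem le_normalizer_closure_convOrbit (M : Subgroup G) (g : G) :
    M ≤ normalizer (closure (convOrbit M g)) := by
  rw [le_normalizer_closure_iff]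
  rintro m hm _ ⟨k, hk, rfl⟩
  exact subset_closure ⟨m * k, M.mul_mem hm hk, by group⟩

theorem closure_convOrbit_union_convOrbit (hM : M ≤ closure (convOrbit M r)) :
    closure (convOrbit M r ∪ convOrbit M x) = M ⊔ closure {r, x} := by
  apply le_antisymm
  · have h_pair : {r, x} ⊆ ((M ⊔ closure {r, x} : Subgroup G) : Set G) :=
      subset_closure.trans (SetLike.coe_subset_coe.mpr le_sup_right)
    rw [closure_le]
    exact Set.union_subset (convOrbit_subset le_sup_left (h_pair (.inl rfl)))
      (convOrbit_subset le_sup_left (h_pair (.inr rfl)))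
  · refine sup_le (hM.trans (closure_mono Set.subset_union_left)) (closure_mono ?_)
    rintro _ (rfl | rfl)
    · exact .inl (mem_convOrbit_self M _)
    · exact .inr (mem_convOrbit_self M _)

theorem convOrbit_sup_closure_pair (hr : r ∈ normalizer (M : Set G))
    (hx : x ∈ normalizer (M : Set G)) (hrg : Commute r g) (hxg : Commute x g) :
    convOrbit (M ⊔ closure {r, x}) g = convOrbit M g := by
  refine convOrbit_eq_of_le_sup le_sup_left (sup_le_sup_left ?_ M)
  rw [closure_le]
  rintro _ (rfl | rfl)
  · exact ⟨hr, mem_centralizer_singleton_iff.mpr hrg⟩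
  · exact ⟨hx, mem_centralizer_singleton_iff.mpr hxg⟩

theorem exists_mem_convOrbit_not_commute (hM : M ≤ closure (convOrbit M x))
    (hr : ¬ M ≤ centralizer {r}) : ∃ s ∈ convOrbit M x, ¬ Commute r s := by
  by_contra! h_commute
  refine hr (hM.trans ((closure_le _).mpr fun s hs ↦ ?_))
  exact mem_centralizer_singleton_iff.mpr (h_commute s hs).symm

theorem not_le_centralizer_singleton_iff :
    ¬ M ≤ centralizer {g} ↔ ∃ m ∈ M, g * m ≠ m * g := by
  simp only [SetLike.not_le_iff_exists, mem_centralizer_singleton_iff, ne_comm, ne_eq]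

end ConvOrbit

namespace IsQuasiSimple

variable {G : Type*} [Group G] {M : Subgroup G} {g : G}

theorem le_closure_convOrbit (hM : IsQuasiSimple M) (hg : g ∈ normalizer (M : Set G))
    (hgM : ¬ M ≤ centralizer {g}) : M ≤ closure (convOrbit M g) := by
  have h_le : closure (convOrbit M g) ≤ normalizer M :=
    (closure_le _).mpr (convOrbit_subset le_normalizer hg)
  refine (hM.le_or_le_centralizer (le_normalizer_closure_convOrbit M g) h_le).resolve_right ?_
  intro h_centralizer
  refine hgM (h_centralizer.trans (centralizer_le ?_))
  exact Set.singleton_subset_iff.mpr (subset_closure (mem_convOrbit_self M g))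

theorem two_lt_ncard_convOrbit [Finite M] (hM : IsQuasiSimple M)
    (hgM : ¬ M ≤ centralizer {g}) : 2 < (convOrbit M g).ncard := by
  have := hM.isPerfect
  rw [ncard_convOrbit]
  exact two_lt_relIndex_of_isPerfect hgM

end IsQuasiSimple

theorem stmt1_general {G : Type*} [Group G] {M : Subgroup G} [Finite M] (hM : IsQuasiSimple M)
    {r x : G} (hr : r ∈ normalizer (M : Set G)) (hx : x ∈ normalizer (M : Set G))
    (hrx : Commute r x) (hrM : ¬ M ≤ centralizer {r}) (hxM : ¬ M ≤ centralizer {x})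
    (hxr : x ∉ convOrbit M r) {O : Set G} (hrO : r ∈ O) (hxO : convOrbit M x ⊆ O) :
    IsTypeC O := by
  obtain ⟨s, hs, hrs⟩ := exists_mem_convOrbit_not_commute (hM.le_closure_convOrbit hx hxM) hrM
  let H := M ⊔ closure {r, x}
  have h_orbit_r : convOrbit H r = convOrbit M r :=
    convOrbit_sup_closure_pair hr hx (.refl r) hrx.symm
  have h_orbit_s : convOrbit H s = convOrbit M x := by
    rw [convOrbit_eq_of_mem (convOrbit_mono le_sup_left x hs)]
    exact convOrbit_sup_closure_pair hr hx hrx (.refl x)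
  have h_closure : closure (convOrbit M r ∪ convOrbit M x) = H :=
    closure_convOrbit_union_convOrbit (hM.le_closure_convOrbit hr hrM)
  have hrH : r ∈ H := h_closure ▸ subset_closure (.inl (mem_convOrbit_self M r))
  have hsH : s ∈ H := h_closure ▸ subset_closure (.inr hs)
  refine ⟨H, r, s, hrH, hrO, hsH, hxO hs, hrs, ?_⟩
  rw [h_orbit_r, h_orbit_s]
  refine ⟨h_closure, fun h_eq ↦ hxr (h_eq ▸ mem_convOrbit_self M x), .inl ?_⟩
  exact ⟨hM.two_lt_ncard_convOrbit hrM, hM.two_lt_ncard_convOrbit hxM⟩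

/-- Theorem: if `M ≤ G` is quasi-simple, `T ≤ N_G(M)` is abelian, `r ∈ T` does not
centralize `M`, and there is `x ∈ O_r^G ∩ T` with `x ∉ O_r^M` not centralizing `M`,
then the conjugacy class `O_r^G` is of type C. -/
theorem stmt1 {G : Type*} [Group G] [Finite G] (M T : Subgroup G)
    (hQS : IsQuasiSimple M)
    (hT : T ≤ Subgroup.normalizer (M : Set G)) (hTab : ∀ a ∈ T, ∀ b ∈ T, a * b = b * a)
    (r : G) (hr : r ∈ T)
    (hn : ∃ m ∈ M, r * m ≠ m * r)
    (hw : ∃ x, x ∈ convOrbit (⊤ : Subgroup G) r ∧ x ∈ T ∧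
      x ∉ convOrbit M r ∧ ∃ m ∈ M, x * m ≠ m * x) :
    IsTypeC (convOrbit (⊤ : Subgroup G) r) := by
  obtain ⟨x, hxO, hxT, hxr, hxn⟩ := hw
  exact stmt1_general hQS (hT hr) (hT hxT) (hTab r hr x hxT)
    (not_le_centralizer_singleton_iff.mpr hn) (not_le_centralizer_singleton_iff.mpr hxn) hxr
    (mem_convOrbit_self ⊤ r) (convOrbit_eq_of_mem hxO ▸ convOrbit_mono le_top x)
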